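/- Let F : ℝ^m → ℝ be L-smooth and let (z_k) be generated by z_{k+1} = z_k + t_k s_k with step sizes t_k > 0, inexact gradients g_k satisfying ‖g_k − ∇F(z_k)‖₂ ≤ δ_k, and directions satisfying c₁‖g_k‖₂² ≤ −g_kᵀ s_k and ‖s_k‖₂ ≤ c₂‖g_k‖₂ for constants c₁, c₂ > 0, where the nonnegative tolerance sequence (δ_k) is summable. If Σ_{k=0}^{∞} t_k ‖g_k‖₂² < ∞ and liminf_{k→∞} ‖g_k‖₂ = 0, then lim_{k→∞} ‖g_k‖₂ = 0. -/

import Mathlib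

open scoped RealInnerProductSpace

/-!
A step of the method moves the exact gradient by at most a constant times `t k * ‖g k‖`. While
`‖g k‖` stays above a threshold `ε > 0` this is at most a constant times `t k * ‖g k‖ ^ 2`, so the
increments of `‖g k‖` above the threshold are summable, including the errors of the inexact
gradients. Hence `‖g k‖` cannot stay above `ε` forever: it would then converge to a limit at least
`ε`, against `liminf ‖g k‖ = 0`. Late descents from `2 * ε` back down to `ε` are impossible as
well: each would use up `ε` of the vanishing tail of the summable increments.
-/

section ThresholdSequences

open Filter Topology

variable {a e : ℕ → ℝ} {ε η : ℝ}

theorem frequently_lt_of_liminf_lt_of_summable (he : Summable e)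
    (hstep : ∀ k, ε ≤ a k → |a (k + 1) - a k| ≤ e k) (hliminf : liminf a atTop < ε) :
    ∃ᶠ k in atTop, a k < ε := by
  by_contra hfreq
  have habove : ∀ᶠ k in atTop, ε ≤ a k := by simpa only [not_frequently, not_lt] using hfreq
  obtain ⟨N, hN⟩ := eventually_atTop.mp habove
  have hcauchy : CauchySeq fun k => a (k + N) :=
    cauchySeq_of_dist_le_of_summable (fun k => e (k + N))
      (fun k => by
        rw [dist_comm, Real.dist_eq, Nat.succ_add]
        exact hstep (k + N) (hN _ (Nat.le_add_left N k)))
      ((summable_nat_add_iff N).mpr he)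
  obtain ⟨l, hl⟩ := cauchySeq_tendsto_of_complete hcauchy
  have hlim : Tendsto a atTop (𝓝 l) := (tendsto_add_atTop_iff_nat N).mp hl
  exact (ge_of_tendsto hlim habove).not_gt (hlim.liminf_eq ▸ hliminf)

theorem eventually_lt_of_frequently_lt_of_summable (he : Summable e)
    (hstep : ∀ k, ε ≤ a k → a k - a (k + 1) ≤ e k) (hfreq : ∃ᶠ k in atTop, a k < ε)
    (hεη : ε < η) : ∀ᶠ k in atTop, a k < η := by
  obtain ⟨N, hN⟩ := Metric.cauchySeq_iff.mp he.hasSum.tendsto_sum_nat.cauchySeq (η - ε)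
    (sub_pos.mpr hεη)
  filter_upwards [eventually_ge_atTop N] with n hn
  by_contra! hη
  have above_of_potential_le {j : ℕ} (hj : n ≤ j)
      (hpot : a n + ∑ i ∈ Finset.range n, e i ≤ a j + ∑ i ∈ Finset.range j, e i) : ε < a j := by
    have htail := (abs_lt.mp (hN j (hn.trans hj) n hn)).2
    linarith
  have potential_le {j : ℕ} (hj : n ≤ j) :
      a n + ∑ i ∈ Finset.range n, e i ≤ a j + ∑ i ∈ Finset.range j, e i := by
    induction j, hj using Nat.le_induction with
    | base => exact le_rfl
    | succ j hj ih =>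
      have hdecrease := hstep j (above_of_potential_le hj ih).le
      rw [Finset.sum_range_succ]
      linarith
  obtain ⟨j, hj, hlt⟩ := frequently_atTop.mp hfreq n
  exact hlt.not_gt (above_of_potential_le hj (potential_le hj))

theorem tendsto_liminf_of_summable_increments (hbdd : atTop.IsBoundedUnder (· ≥ ·) a)
    (hstep : ∀ ε > liminf a atTop,
      ∃ e : ℕ → ℝ, Summable e ∧ ∀ k, ε ≤ a k → |a (k + 1) - a k| ≤ e k) :
    Tendsto a atTop (𝓝 (liminf a atTop)) := by
  refine tendsto_order.mpr ⟨fun x hx => eventually_lt_of_lt_liminf hx hbdd, fun η hη => ?_⟩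
  obtain ⟨ε, hε, hεη⟩ := exists_between hη
  obtain ⟨e, he, hinc⟩ := hstep ε hε
  have hfreq : ∃ᶠ k in atTop, a k < ε := frequently_lt_of_liminf_lt_of_summable he hinc hε
  have hdec (k : ℕ) (hk : ε ≤ a k) : a k - a (k + 1) ≤ e k :=
    (le_abs_self _).trans ((abs_sub_comm _ _).trans_le (hinc k hk))
  exact eventually_lt_of_frequently_lt_of_summable he hdec hfreq hεη

end ThresholdSequences

section InexactLipschitz

open Filter Topology
open scoped NNReal

theorem dist_le_of_lipschitzWith_of_dist_le {X Y : Type*} [PseudoMetricSpace X]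
    [PseudoMetricSpace Y] {G : X → Y} {K : ℝ≥0} (hG : LipschitzWith K G) {x x' : X} {y y' : Y}
    {δ δ' : ℝ} (hy : dist y (G x) ≤ δ) (hy' : dist y' (G x') ≤ δ') :
    dist y y' ≤ K * dist x x' + (δ + δ') :=
  calc
    dist y y' ≤ dist y (G x) + dist (G x) (G x') + dist (G x') y' := dist_triangle4 ..
    _ ≤ δ + K * dist x x' + δ' := by
      gcongr
      · exact hG.dist_le_mul x x'
      · rwa [dist_comm]
    _ = K * dist x x' + (δ + δ') := by ring

theorem le_inv_mul_mul_sq_of_le_mul {d w r ε : ℝ} (hd : 0 ≤ d) (hdr : d ≤ w * r) (hε : 0 < ε)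
    (hr : ε ≤ r) : d ≤ ε⁻¹ * (w * r ^ 2) :=
  (le_inv_mul_iff₀ hε).mpr <|
    calc
      ε * d ≤ r * (w * r) := mul_le_mul hr hdr hd (hε.le.trans hr)
      _ = w * r ^ 2 := by ring

theorem tendsto_norm_zero_of_lipschitzWith_of_dist_le {X E : Type*} [PseudoMetricSpace X]
    [SeminormedAddCommGroup E] {G : X → E} {K : ℝ≥0} (hG : LipschitzWith K G) {z : ℕ → X}
    {g : ℕ → E} {w δ : ℕ → ℝ} (hδ : Summable δ) (herr : ∀ k, ‖g k - G (z k)‖ ≤ δ k)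
    (hdist : ∀ k, dist (z (k + 1)) (z k) ≤ w k * ‖g k‖)
    (hsum : Summable fun k => w k * ‖g k‖ ^ 2) (hliminf : liminf (fun k => ‖g k‖) atTop = 0) :
    Tendsto (fun k => ‖g k‖) atTop (𝓝 0) := by
  have hbdd : atTop.IsBoundedUnder (· ≥ ·) fun k => ‖g k‖ :=
    isBoundedUnder_of ⟨0, fun k => norm_nonneg (g k)⟩
  rw [← hliminf]
  refine tendsto_liminf_of_summable_increments hbdd fun ε hε => ?_
  rw [gt_iff_lt, hliminf] at hε
  refine ⟨fun k => K * (ε⁻¹ * (w k * ‖g k‖ ^ 2)) + (δ (k + 1) + δ k),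
    ((hsum.mul_left _).mul_left _).add (((summable_nat_add_iff 1).mpr hδ).add hδ),
    fun k hk => ?_⟩
  have herr_dist (j : ℕ) : dist (g j) (G (z j)) ≤ δ j := (dist_eq_norm _ _).trans_le (herr j)
  calc
    |‖g (k + 1)‖ - ‖g k‖| ≤ dist (g (k + 1)) (g k) :=
      (abs_norm_sub_norm_le _ _).trans_eq (dist_eq_norm _ _).symm
    _ ≤ K * dist (z (k + 1)) (z k) + (δ (k + 1) + δ k) :=
      dist_le_of_lipschitzWith_of_dist_le hG (herr_dist (k + 1)) (herr_dist k)
    _ ≤ K * (ε⁻¹ * (w k * ‖g k‖ ^ 2)) + (δ (k + 1) + δ k) := by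
      gcongr
      exact le_inv_mul_mul_sq_of_le_mul dist_nonneg (hdist k) hε hk

theorem stmt_9_general {E E' : Type*} [SeminormedAddCommGroup E] [NormedSpace ℝ E]
    [SeminormedAddCommGroup E'] {G : E → E'} {K : ℝ≥0} (hG : LipschitzWith K G) {z s : ℕ → E}
    {g : ℕ → E'} {t δ : ℕ → ℝ} {c : ℝ} (ht : ∀ k, 0 ≤ t k) (hδ : Summable δ)
    (hupd : ∀ k, z (k + 1) = z k + t k • s k) (herr : ∀ k, ‖g k - G (z k)‖ ≤ δ k)
    (hbnd : ∀ k, ‖s k‖ ≤ c * ‖g k‖) (hsum : Summable fun k => t k * ‖g k‖ ^ 2)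
    (hliminf : liminf (fun k => ‖g k‖) atTop = 0) :
    Tendsto (fun k => ‖g k‖) atTop (𝓝 0) := by
  have hdist (k : ℕ) : dist (z (k + 1)) (z k) ≤ c * t k * ‖g k‖ :=
    calc
      dist (z (k + 1)) (z k) = t k * ‖s k‖ := by
        rw [hupd, dist_self_add_left, norm_smul_of_nonneg (ht k)]
      _ ≤ t k * (c * ‖g k‖) := mul_le_mul_of_nonneg_left (hbnd k) (ht k)
      _ = c * t k * ‖g k‖ := by ring
  have hsum' : Summable fun k => c * t k * ‖g k‖ ^ 2 := by
    simpa only [mul_assoc] using hsum.mul_left c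
  exact tendsto_norm_zero_of_lipschitzWith_of_dist_le hG hδ herr hdist hsum' hliminf

end InexactLipschitz

/-- if the weighted squared gradient norms are summable and the liminf of the
inexact gradient norms is zero, then the inexact gradient norms converge to zero. -/
theorem stmt_9 (m : ℕ) (F : EuclideanSpace ℝ (Fin m) → ℝ) (L : ℝ)
    (hdiff : Differentiable ℝ F)
    (hlip : ∀ x y : EuclideanSpace ℝ (Fin m), ‖gradient F x - gradient F y‖ ≤ L * ‖x - y‖)
    (z s g : ℕ → EuclideanSpace ℝ (Fin m)) (t δ : ℕ → ℝ)
    (c₁ c₂ : ℝ) (hc₁ : 0 < c₁) (hc₂ : 0 < c₂)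
    (ht : ∀ k, 0 < t k) (hδ : ∀ k, 0 ≤ δ k)
    (hδsum : Summable δ)
    (hupd : ∀ k, z (k + 1) = z k + t k • s k)
    (herr : ∀ k, ‖g k - gradient F (z k)‖ ≤ δ k)
    (hdesc : ∀ k, c₁ * ‖g k‖ ^ 2 ≤ -⟪g k, s k⟫)
    (hbnd : ∀ k, ‖s k‖ ≤ c₂ * ‖g k‖)
    (hsum : Summable (fun k => t k * ‖g k‖ ^ 2))
    (hliminf : Filter.liminf (fun k => ‖g k‖) Filter.atTop = 0) :
    Filter.Tendsto (fun k => ‖g k‖) Filter.atTop (nhds 0) :=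
  stmt_9_general (LipschitzWith.of_dist_le' (by simpa only [dist_eq_norm] using hlip))
    (fun k => (ht k).le) hδsum hupd herr hbnd hsum hliminf
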